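/- arXiv:1309.4994 — 2 statements merged into one kernel-verified Lean document; each statement's English description precedes it below -/
import Mathlib

section
/- For every Subjective Logic opinion T = (b_T,d_T,u_T), if C = (0,1,0) (pure disbelief), then the combination W = T⊛C equals (0,1,0), i.e. b_W = 0, d_W = 1 and u_W = 0. -/
/-- A Subjective Logic opinion: belief, disbelief, uncertainty. -/
def IsOpinion (b d u : ℝ) : Prop := 0 ≤ b ∧ 0 ≤ d ∧ 0 ≤ u ∧ b + d + u = 1

/-- The direction α_O of an opinion. -/
noncomputable def alphaO (b d u : ℝ) : ℝ :=
  if b = 1 then 0 else Real.arctan (Real.sqrt 3 * u / (2 * d + u))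

/-- The angle β_O of an opinion. -/
noncomputable def betaO (b d u : ℝ) : ℝ :=
  if d = 1 then Real.pi / 3 else Real.arctan (Real.sqrt 3 * u / (2 - 2 * d - u))

/-- The angle γ_O = π/3 − β_O. -/
noncomputable def gammaO (b d u : ℝ) : ℝ := Real.pi / 3 - betaO b d u

/-- The length |OU|. -/
noncomputable def distOU (b d u : ℝ) : ℝ := Real.sqrt ((1/3) * (1 + d - u)^2 + b^2)

/-- The angle δ_O. -/
noncomputable def deltaO (b d u : ℝ) : ℝ :=
  if u = 1 then 0 else Real.arcsin (b / distOU b d u)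

/-- The angle ε_O = π − γ_O − δ_O. -/
noncomputable def epsO (b d u : ℝ) : ℝ := Real.pi - gammaO b d u - deltaO b d u

/-- Cartesian x-coordinate of an opinion. -/
noncomputable def xO (d u : ℝ) : ℝ := (2 * d + u) / Real.sqrt 3

/-- Cartesian y-coordinate of an opinion. -/
noncomputable def yO (u : ℝ) : ℝ := u

/-- x-coordinate of the point M_O. -/
noncomputable def xM (b d u : ℝ) : ℝ :=
  (2 - yO u + Real.tan (alphaO b d u) * xO d u) / (Real.tan (alphaO b d u) + Real.sqrt 3)

/-- y-coordinate of the point M_O. -/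
noncomputable def yM (b d u : ℝ) : ℝ := -Real.sqrt 3 * xM b d u + 2

/-- The ratio r_O = |BO| / |BM_O|. -/
noncomputable def rO (b d u : ℝ) : ℝ :=
  Real.sqrt (xO d u ^ 2 + yO u ^ 2) / Real.sqrt (xM b d u ^ 2 + yM b d u ^ 2)

/-- The projected direction α' = (3/π)·α_C·ε_T − β_T. -/
noncomputable def alphaProj (bT dT uT bC dC uC : ℝ) : ℝ :=
  (3 / Real.pi) * alphaO bC dC uC * epsO bT dT uT - betaO bT dT uT

/-- The maximal length |TM_{C'}|. -/
noncomputable def Lmax (bT dT uT bC dC uC : ℝ) : ℝ :=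
  if alphaProj bT dT uT bC dC uC = Real.pi / 2 then 2 * bT
  else if alphaProj bT dT uT bC dC uC = -(Real.pi / 3) then (2 / Real.sqrt 3) * uT
  else if alphaProj bT dT uT bC dC uC = 2 * Real.pi / 3 then (2 / Real.sqrt 3) * (1 - uT)
  else (2 * Real.sqrt (Real.tan (alphaProj bT dT uT bC dC uC) ^ 2 + 1)
        / |Real.tan (alphaProj bT dT uT bC dC uC) + Real.sqrt 3|) * bT

/-- The length ℓ = |TC'| = r_C·|TM_{C'}|. -/
noncomputable def lenTC (bT dT uT bC dC uC : ℝ) : ℝ :=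
  rO bC dC uC * Lmax bT dT uT bC dC uC

/-- Uncertainty of the combination W = T⊛C. -/
noncomputable def uW (bT dT uT bC dC uC : ℝ) : ℝ :=
  uT + Real.sin (alphaProj bT dT uT bC dC uC) * lenTC bT dT uT bC dC uC

/-- Disbelief of the combination W = T⊛C. -/
noncomputable def dW (bT dT uT bC dC uC : ℝ) : ℝ :=
  dT + (uT - uW bT dT uT bC dC uC) * Real.cos (Real.pi / 3)
    + Real.cos (alphaProj bT dT uT bC dC uC) * Real.sin (Real.pi / 3)
      * lenTC bT dT uT bC dC uC

/-- Belief of the combination W = T⊛C. -/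
noncomputable def bW (bT dT uT bC dC uC : ℝ) : ℝ :=
  1 - dW bT dT uT bC dC uC - uW bT dT uT bC dC uC

/-! The combination starts at `T` and moves in the direction `-β_T`, which points from `T` to the
vertex `D`. The supporting line of the side `UD` has distance `b_T` from `T` and meets `TD` at the
angle `γ_T`, so the maximal length in that direction is `b_T / sin γ_T = |TD|`. Since `r_C = 1`, the
whole segment `TD` is traversed and the combination ends at `D`. -/

open Real

theorem sqrt_sq_add_sq_mul_cos_arctan_div {x : ℝ} (hx : 0 < x) (y : ℝ) :
    √(x ^ 2 + y ^ 2) * cos (arctan (y / x)) = x := by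
  have hsqrt : √(x ^ 2 + y ^ 2) = x * √(1 + (y / x) ^ 2) := by
    rw [← sqrt_sq hx.le, ← sqrt_mul (sq_nonneg x), sqrt_sq hx.le]
    congr 1
    field_simp
  rw [hsqrt, cos_arctan]
  field_simp

theorem sqrt_sq_add_sq_mul_sin_arctan_div {x : ℝ} (hx : 0 < x) (y : ℝ) :
    √(x ^ 2 + y ^ 2) * sin (arctan (y / x)) = y := by
  rw [← tan_mul_cos (cos_arctan_pos _).ne', tan_arctan, mul_left_comm,
    sqrt_sq_add_sq_mul_cos_arctan_div hx, div_mul_cancel₀ y hx.ne']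

theorem sqrt_tan_sq_add_one_eq_inv_abs_cos {x : ℝ} (hx : cos x ≠ 0) :
    √(tan x ^ 2 + 1) = |cos x|⁻¹ := by
  rw [add_comm, ← inv_inv (1 + tan x ^ 2), inv_one_add_tan_sq hx, sqrt_inv, sqrt_sq_eq_abs]

theorem tan_add_sqrt_three_eq {x : ℝ} (hx : cos x ≠ 0) :
    tan x + √3 = 2 * sin (x + π / 3) / cos x := by
  rw [sin_add, cos_pi_div_three, sin_pi_div_three, tan_eq_sin_div_cos]
  field_simp

theorem alphaProj_zero_uncertainty (bT dT uT bC dC : ℝ) :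
    alphaProj bT dT uT bC dC 0 = -betaO bT dT uT := by
  simp [alphaProj, alphaO]

theorem tan_alphaO_nonneg {b d u : ℝ} (hd : 0 ≤ d) (hu : 0 ≤ u) : 0 ≤ tan (alphaO b d u) := by
  unfold alphaO
  split_ifs
  · rw [tan_zero]
  · rw [tan_arctan]
    positivity

theorem xM_zero_belief {d u : ℝ} (hC : IsOpinion 0 d u) : xM 0 d u = xO d u := by
  obtain ⟨-, hd, hu, hsum⟩ := hC
  have htan : tan (alphaO 0 d u) + √3 ≠ 0 := by
    have := tan_alphaO_nonneg (b := 0) hd hu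
    positivity
  have hx : 2 - u = √3 * xO d u := by
    rw [xO, mul_div_cancel₀ _ (by positivity)]
    linarith
  rw [xM, yO, hx, ← add_mul, add_comm √3, mul_div_cancel_left₀ _ htan]

theorem yM_zero_belief {d u : ℝ} (hC : IsOpinion 0 d u) : yM 0 d u = yO u := by
  rw [yM, xM_zero_belief hC, xO, yO, neg_mul, mul_div_cancel₀ _ (by positivity)]
  linarith [hC.2.2.2]

theorem rO_zero_belief {d u : ℝ} (hC : IsOpinion 0 d u) : rO 0 d u = 1 := by
  rw [rO, xM_zero_belief hC, yM_zero_belief hC]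
  obtain ⟨-, hd, -, hsum⟩ := hC
  have hx : 0 < xO d u := div_pos (by linarith) (by positivity)
  exact div_self (by positivity)

/-- The length `|OD|`, the value of `Lmax` in the direction of disbelief. It is computed from the
Cartesian coordinates of `O` and `D = (2/√3, 0)`. -/
noncomputable def distOD (d u : ℝ) : ℝ := √((2 / √3 - xO d u) ^ 2 + yO u ^ 2)

theorem xO_lt_two_div_sqrt_three {d u : ℝ} (hd : d ≠ 1) (hu : 0 ≤ u) (hdu : d + u ≤ 1) :
    xO d u < 2 / √3 := by
  have hd_lt : d < 1 := lt_of_le_of_ne (by linarith) hd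
  exact div_lt_div_of_pos_right (by linarith) (by positivity)

theorem distOD_pos {d u : ℝ} (hd : d ≠ 1) (hu : 0 ≤ u) (hdu : d + u ≤ 1) : 0 < distOD d u := by
  have hx : 0 < 2 / √3 - xO d u := sub_pos.mpr (xO_lt_two_div_sqrt_three hd hu hdu)
  unfold distOD
  positivity

theorem distOD_one_zero : distOD 1 0 = 0 := by
  simp [distOD, xO, yO]

theorem betaO_one (b u : ℝ) : betaO b 1 u = π / 3 := if_pos rfl

theorem betaO_eq_arctan (b : ℝ) {d : ℝ} (hd : d ≠ 1) (u : ℝ) :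
    betaO b d u = arctan (yO u / (2 / √3 - xO d u)) := by
  rw [betaO, if_neg hd, xO, yO, ← sub_div, div_div_eq_mul_div, mul_comm √3, sub_sub]

theorem neg_pi_div_two_lt_betaO (b d u : ℝ) : -(π / 2) < betaO b d u := by
  unfold betaO
  split_ifs
  · linarith [pi_pos]
  · exact neg_pi_div_two_lt_arctan _

theorem betaO_lt_pi_div_two (b d u : ℝ) : betaO b d u < π / 2 := by
  unfold betaO
  split_ifs
  · linarith [pi_pos]
  · exact arctan_lt_pi_div_two _

theorem distOD_mul_cos_betaO (b : ℝ) {d u : ℝ} (hu : 0 ≤ u) (hdu : d + u ≤ 1) :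
    distOD d u * cos (betaO b d u) = 2 / √3 - xO d u := by
  by_cases hd : d = 1
  · obtain rfl : u = 0 := by linarith
    simp [hd, distOD_one_zero, xO]
  · rw [betaO_eq_arctan b hd]
    exact sqrt_sq_add_sq_mul_cos_arctan_div
      (sub_pos.mpr (xO_lt_two_div_sqrt_three hd hu hdu)) (yO u)

theorem distOD_mul_sin_betaO (b : ℝ) {d u : ℝ} (hu : 0 ≤ u) (hdu : d + u ≤ 1) :
    distOD d u * sin (betaO b d u) = u := by
  by_cases hd : d = 1
  · obtain rfl : u = 0 := by linarith
    simp [hd, distOD_one_zero]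
  · rw [betaO_eq_arctan b hd]
    exact sqrt_sq_add_sq_mul_sin_arctan_div
      (sub_pos.mpr (xO_lt_two_div_sqrt_three hd hu hdu)) (yO u)

-- Both sides are the distance from `O` to the line `UD`.
theorem distOD_mul_sin_gammaO {b d u : ℝ} (hb : 0 ≤ b) (hu : 0 ≤ u) (hsum : b + d + u = 1) :
    distOD d u * sin (gammaO b d u) = b := by
  have hdu : d + u ≤ 1 := by linarith
  calc distOD d u * sin (gammaO b d u)
      = √3 / 2 * (distOD d u * cos (betaO b d u))
          - 1 / 2 * (distOD d u * sin (betaO b d u)) := by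
        rw [gammaO, sin_sub, sin_pi_div_three, cos_pi_div_three]
        ring
    _ = √3 / 2 * (2 / √3 - xO d u) - 1 / 2 * u := by
        rw [distOD_mul_cos_betaO b hu hdu, distOD_mul_sin_betaO b hu hdu]
    _ = b := by
        rw [xO]
        field_simp
        linarith

theorem gammaO_nonneg {b d u : ℝ} (hb : 0 ≤ b) (hu : 0 ≤ u) (hsum : b + d + u = 1) :
    0 ≤ gammaO b d u := by
  by_cases hd : d = 1
  · rw [gammaO, hd, betaO_one, sub_self]
  by_contra! hneg
  have hsin : sin (gammaO b d u) < 0 := by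
    refine sin_neg_of_neg_of_neg_pi_lt hneg ?_
    rw [gammaO]
    linarith [pi_pos, betaO_lt_pi_div_two b d u]
  have hprod := mul_neg_of_pos_of_neg (distOD_pos hd hu (by linarith)) hsin
  rw [distOD_mul_sin_gammaO hb hu hsum] at hprod
  exact hprod.not_ge hb

-- The ray from `T` makes the angle `α' + π/3` with the line `UD`, which is at distance `b_T`.
theorem Lmax_mul_sin_add_pi_div_three {bT dT uT bC dC uC : ℝ}
    (hlower : -(π / 3) < alphaProj bT dT uT bC dC uC)
    (hupper : alphaProj bT dT uT bC dC uC < 2 * π / 3) :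
    Lmax bT dT uT bC dC uC * sin (alphaProj bT dT uT bC dC uC + π / 3) = bT := by
  unfold Lmax
  rw [if_neg hlower.ne', if_neg hupper.ne]
  generalize alphaProj bT dT uT bC dC uC = φ at *
  split_ifs with hφ
  · rw [hφ, add_comm, sin_add_pi_div_two, cos_pi_div_three]
    ring
  · have hcos : cos φ ≠ 0 := by
      rcases lt_or_gt_of_ne hφ with h | h
      · exact (cos_pos_of_mem_Ioo ⟨by linarith, h⟩).ne'
      · exact (cos_neg_of_pi_div_two_lt_of_lt h (by linarith)).ne
    have hsin : 0 < sin (φ + π / 3) := sin_pos_of_pos_of_lt_pi (by linarith) (by linarith)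
    rw [sqrt_tan_sq_add_one_eq_inv_abs_cos hcos, tan_add_sqrt_three_eq hcos, abs_div,
      abs_of_pos (mul_pos two_pos hsin)]
    generalize sin (φ + π / 3) = s at hsin ⊢
    field_simp

section PureDisbelief

variable {b d u : ℝ}

theorem Lmax_zero_uncertainty (bC dC : ℝ) (hb : 0 ≤ b) (hu : 0 ≤ u) (hsum : b + d + u = 1) :
    Lmax b d u bC dC 0 = distOD d u := by
  have hproj := alphaProj_zero_uncertainty b d u bC dC
  by_cases hβ : betaO b d u = π / 3
  · have hdist : distOD d u * (√3 / 2) = u := by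
      rw [← sin_pi_div_three, ← hβ]
      exact distOD_mul_sin_betaO b hu (by linarith)
    rw [Lmax, hproj, hβ, if_neg (by linarith [pi_pos]), if_pos rfl, div_mul_eq_mul_div,
      div_eq_iff (by positivity)]
    linarith
  · have hγ : 0 < gammaO b d u :=
      (gammaO_nonneg hb hu hsum).lt_of_ne' (sub_ne_zero.mpr (Ne.symm hβ))
    have hβ_gt := neg_pi_div_two_lt_betaO b d u
    have hγ_eq : alphaProj b d u bC dC 0 + π / 3 = gammaO b d u := by
      rw [hproj, gammaO]
      ring
    have hsin : 0 < sin (gammaO b d u) :=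
      sin_pos_of_pos_of_lt_pi hγ (by rw [gammaO]; linarith)
    refine mul_right_cancel₀ hsin.ne' ?_
    calc Lmax b d u bC dC 0 * sin (gammaO b d u) = b := by
          rw [← hγ_eq]
          exact Lmax_mul_sin_add_pi_div_three (by linarith) (by linarith)
      _ = distOD d u * sin (gammaO b d u) := (distOD_mul_sin_gammaO hb hu hsum).symm

theorem lenTC_pure_disbelief (hb : 0 ≤ b) (hu : 0 ≤ u) (hsum : b + d + u = 1) :
    lenTC b d u 0 1 0 = distOD d u := by
  rw [lenTC, rO_zero_belief (by norm_num [IsOpinion]), one_mul,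
    Lmax_zero_uncertainty 0 1 hb hu hsum]

theorem uW_pure_disbelief (hb : 0 ≤ b) (hu : 0 ≤ u) (hsum : b + d + u = 1) :
    uW b d u 0 1 0 = 0 := by
  rw [uW, lenTC_pure_disbelief hb hu hsum, alphaProj_zero_uncertainty, sin_neg, neg_mul,
    mul_comm, distOD_mul_sin_betaO b hu (by linarith), add_neg_cancel]

theorem dW_pure_disbelief (hb : 0 ≤ b) (hu : 0 ≤ u) (hsum : b + d + u = 1) :
    dW b d u 0 1 0 = 1 := by
  have hstep : cos (betaO b d u) * sin (π / 3) * distOD d u = 1 - d - u / 2 := by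
    rw [mul_right_comm, mul_comm (cos _), distOD_mul_cos_betaO b hu (by linarith),
      sin_pi_div_three, xO]
    field_simp
    ring
  rw [dW, uW_pure_disbelief hb hu hsum, lenTC_pure_disbelief hb hu hsum,
    alphaProj_zero_uncertainty, cos_neg, hstep, cos_pi_div_three]
  ring

theorem stmt15_general (hb : 0 ≤ b) (hu : 0 ≤ u) (hsum : b + d + u = 1) :
    bW b d u 0 1 0 = 0 ∧ dW b d u 0 1 0 = 1 ∧ uW b d u 0 1 0 = 0 := by
  have hd_one := dW_pure_disbelief hb hu hsum
  have hu_zero := uW_pure_disbelief hb hu hsum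
  refine ⟨?_, hd_one, hu_zero⟩
  rw [bW, hd_one, hu_zero, sub_self, sub_zero]

end PureDisbelief

/-- If C = (0,1,0) (pure disbelief), then the combination W = T⊛C equals (0,1,0). -/
theorem stmt15 (bT dT uT : ℝ) (hT : IsOpinion bT dT uT) :
    bW bT dT uT 0 1 0 = 0 ∧ dW bT dT uT 0 1 0 = 1 ∧ uW bT dT uT 0 1 0 = 0 :=
  stmt15_general hT.1 hT.2.2.1 hT.2.2.2
end

section
/- For every Subjective Logic opinion T = (b_T,d_T,u_T), if C = (0,0,1) (complete uncertainty), then the combination W = T⊛C equals (0,0,1), i.e. b_W = 0, d_W = 0 and u_W = 1. -/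
/-!
For `C = (0, 0, 1)` one has `α_C = π/3`, so the projected direction is `α' = 2π/3 - δ_T`, which is
the direction of the vertex `U` seen from `T`. The ray from `T` in that direction meets the side
`DU` at `U`, so the maximal length is `|TU|`; and `C` itself lies on `DU`, so `M_C = C` and
`r_C = 1`. Hence `T` is moved by exactly the vector `TU`.
-/

section

open Real

theorem sqrt_add_sq_mul_sin_arcsin (a b : ℝ) :
    √(a ^ 2 + b ^ 2) * sin (arcsin (b / √(a ^ 2 + b ^ 2))) = b := by
  have hle : |b| ≤ √(a ^ 2 + b ^ 2) := abs_le_sqrt (le_add_of_nonneg_left (sq_nonneg a))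
  have hratio : |b / √(a ^ 2 + b ^ 2)| ≤ 1 := by
    rw [abs_div, abs_of_nonneg (sqrt_nonneg _)]
    exact div_le_one_of_le₀ hle (sqrt_nonneg _)
  rw [sin_arcsin (abs_le.mp hratio).1 (abs_le.mp hratio).2]
  refine mul_div_cancel_of_imp' fun hzero => ?_
  rwa [hzero, abs_nonpos_iff] at hle

theorem sqrt_add_sq_mul_cos_arcsin (a b : ℝ) :
    √(a ^ 2 + b ^ 2) * cos (arcsin (b / √(a ^ 2 + b ^ 2))) = |a| := by
  have hsin := sqrt_add_sq_mul_sin_arcsin a b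
  have hsq : √(a ^ 2 + b ^ 2) ^ 2 = a ^ 2 + b ^ 2 := sq_sqrt (by positivity)
  set θ := arcsin (b / √(a ^ 2 + b ^ 2))
  rw [← abs_of_nonneg (mul_nonneg (sqrt_nonneg _) (cos_arcsin_nonneg _)), ← sq_eq_sq_iff_abs_eq_abs]
  calc (√(a ^ 2 + b ^ 2) * cos θ) ^ 2
      = √(a ^ 2 + b ^ 2) ^ 2 - (√(a ^ 2 + b ^ 2) * sin θ) ^ 2 := by rw [mul_pow, cos_sq']; ring
    _ = a ^ 2 := by rw [hsin, hsq]; ring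

theorem sin_add_pi_div_three (θ : ℝ) : sin (θ + π / 3) = (sin θ + √3 * cos θ) / 2 := by
  rw [sin_add, sin_pi_div_three, cos_pi_div_three]
  ring

theorem two_mul_sqrt_tan_sq_add_one_div_abs {θ : ℝ} (hθ : cos θ ≠ 0) :
    2 * √(tan θ ^ 2 + 1) / |tan θ + √3| = |sin (θ + π / 3)|⁻¹ := by
  have hsec : √(tan θ ^ 2 + 1) = |cos θ|⁻¹ := by
    rw [add_comm, ← inv_inv (1 + tan θ ^ 2), inv_one_add_tan_sq hθ, sqrt_inv, sqrt_sq_eq_abs]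
  have htan : tan θ + √3 = 2 * sin (θ + π / 3) / cos θ := by
    rw [sin_add_pi_div_three, tan_eq_sin_div_cos]
    field_simp
  have habs : |cos θ| ≠ 0 := abs_ne_zero.mpr hθ
  rw [hsec, htan, abs_div, abs_mul, abs_two]
  field_simp

-- The distance from `T` to the line `DU` is `bT`, and that line has direction `-π/3`, so it makes
-- the angle `α' + π/3` with the ray leaving `T`.
theorem Lmax_eq_div_sin {bT dT uT bC dC uC : ℝ}
    (hα : alphaProj bT dT uT bC dC uC ∈ Set.Ioo (-(π / 3)) (2 * π / 3)) :
    Lmax bT dT uT bC dC uC = bT / sin (alphaProj bT dT uT bC dC uC + π / 3) := by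
  obtain ⟨hlower, hupper⟩ := hα
  unfold Lmax
  set α := alphaProj bT dT uT bC dC uC
  rw [if_neg hlower.ne', if_neg hupper.ne]
  split_ifs with hright
  · rw [hright, sin_add_pi_div_three, sin_pi_div_two, cos_pi_div_two]
    ring
  · have hcos : cos α ≠ 0 := by
      rcases lt_or_gt_of_ne hright with hlt | hgt
      · exact (cos_pos_of_mem_Ioo ⟨by linarith, hlt⟩).ne'
      · exact (cos_neg_of_pi_div_two_lt_of_lt hgt (by linarith)).ne
    have hsin : 0 < sin (α + π / 3) := sin_pos_of_pos_of_lt_pi (by linarith) (by linarith)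
    rw [two_mul_sqrt_tan_sq_add_one_div_abs hcos, abs_of_pos hsin, inv_mul_eq_div]

theorem Lmax_eq_of_alphaProj_eq {bT dT uT bC dC uC : ℝ}
    (hα : alphaProj bT dT uT bC dC uC = 2 * π / 3) :
    Lmax bT dT uT bC dC uC = 2 / √3 * (1 - uT) := by
  have hpi := pi_pos
  rw [Lmax, hα, if_neg (by linarith), if_neg (by linarith), if_pos rfl]

theorem alphaO_zero_zero_one : alphaO 0 0 1 = π / 3 := by
  rw [alphaO, if_neg zero_ne_one, mul_one, mul_zero, zero_add, div_one, arctan_sqrt_three]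

theorem alphaProj_zero_zero_one (b d u : ℝ) :
    alphaProj b d u 0 0 1 = π - (deltaO b d u + π / 3) := by
  rw [alphaProj, epsO, gammaO, alphaO_zero_zero_one]
  field_simp
  ring

theorem deltaO_zero_left (d u : ℝ) : deltaO 0 d u = 0 := by
  rw [deltaO, zero_div, arcsin_zero, ite_self]

theorem distOU_eq_sqrt (b d u : ℝ) : distOU b d u = √(((1 + d - u) / √3) ^ 2 + b ^ 2) := by
  rw [distOU, div_pow, sq_sqrt zero_le_three, one_div_mul_eq_div]

namespace IsOpinion

variable {b d u : ℝ}

theorem tan_alphaO_nonneg (h : IsOpinion b d u) : 0 ≤ tan (alphaO b d u) := by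
  obtain ⟨-, hd, hu, -⟩ := h
  unfold alphaO
  split_ifs
  · rw [tan_zero]
  · rw [tan_arctan]
    positivity

theorem xM_zero_left (h : IsOpinion 0 d u) : xM 0 d u = xO d u := by
  have htan : 0 < tan (alphaO 0 d u) + √3 :=
    add_pos_of_nonneg_of_pos h.tan_alphaO_nonneg (by positivity)
  have hside : 2 - yO u = √3 * xO d u := by
    rw [xO, yO, mul_div_cancel₀ _ (by positivity)]
    linarith [h.2.2.2]
  rw [xM, hside, div_eq_iff htan.ne']
  ring

theorem yM_zero_left (h : IsOpinion 0 d u) : yM 0 d u = yO u := by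
  rw [yM, h.xM_zero_left, xO, yO, neg_mul, mul_div_cancel₀ _ (by positivity)]
  linarith [h.2.2.2]

theorem rO_zero_left (h : IsOpinion 0 d u) : rO 0 d u = 1 := by
  rw [rO, h.xM_zero_left, h.yM_zero_left]
  obtain ⟨-, hd, -, hsum⟩ := h
  have hx : 0 < xO d u := div_pos (by linarith) (by positivity)
  exact div_self (by positivity)

theorem deltaO_eq_arcsin (h : IsOpinion b d u) : deltaO b d u = arcsin (b / distOU b d u) := by
  rcases eq_or_ne u 1 with rfl | hu
  · have hb : b = 0 := by linarith [h.1, h.2.1, h.2.2.2]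
    rw [deltaO, if_pos rfl, hb, zero_div, arcsin_zero]
  · rw [deltaO, if_neg hu]

theorem distOU_mul_sin_deltaO (h : IsOpinion b d u) :
    distOU b d u * sin (deltaO b d u) = b := by
  rw [h.deltaO_eq_arcsin, distOU_eq_sqrt, sqrt_add_sq_mul_sin_arcsin]

theorem distOU_mul_cos_deltaO (h : IsOpinion b d u) :
    distOU b d u * cos (deltaO b d u) = (1 + d - u) / √3 := by
  rw [h.deltaO_eq_arcsin, distOU_eq_sqrt, sqrt_add_sq_mul_cos_arcsin, abs_of_nonneg]
  exact div_nonneg (by linarith [h.1, h.2.1, h.2.2.2]) (sqrt_nonneg 3)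

theorem distOU_mul_sin_alphaProj_zero_zero_one (h : IsOpinion b d u) :
    distOU b d u * sin (alphaProj b d u 0 0 1) = 1 - u := by
  calc distOU b d u * sin (alphaProj b d u 0 0 1)
      = (distOU b d u * sin (deltaO b d u) + √3 * (distOU b d u * cos (deltaO b d u))) / 2 := by
        rw [alphaProj_zero_zero_one, sin_pi_sub, sin_add_pi_div_three]
        ring
    _ = (b + (1 + d - u)) / 2 := by
        rw [h.distOU_mul_sin_deltaO, h.distOU_mul_cos_deltaO, mul_div_cancel₀ _ (by positivity)]
    _ = 1 - u := by linarith [h.2.2.2]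

theorem distOU_mul_cos_alphaProj_zero_zero_one (h : IsOpinion b d u) :
    distOU b d u * cos (alphaProj b d u 0 0 1) = (b - d) / √3 := by
  calc distOU b d u * cos (alphaProj b d u 0 0 1)
      = (√3 * (distOU b d u * sin (deltaO b d u)) - distOU b d u * cos (deltaO b d u)) / 2 := by
        rw [alphaProj_zero_zero_one, cos_pi_sub, cos_add, cos_pi_div_three, sin_pi_div_three]
        ring
    _ = (√3 * b - (1 + d - u) / √3) / 2 := by
        rw [h.distOU_mul_sin_deltaO, h.distOU_mul_cos_deltaO]
    _ = (b - d) / √3 := by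
        field_simp
        rw [sq_sqrt zero_le_three]
        linarith [h.2.2.2]

theorem distOU_zero_left (h : IsOpinion 0 d u) : distOU 0 d u = 2 / √3 * (1 - u) := by
  have hcos := h.distOU_mul_cos_deltaO
  rw [deltaO_zero_left, cos_zero, mul_one] at hcos
  rw [hcos, div_mul_eq_mul_div]
  congr 1
  linarith [h.2.2.2]

theorem deltaO_mem_Ioc (h : IsOpinion b d u) (hb : 0 < b) : deltaO b d u ∈ Set.Ioc 0 (π / 2) := by
  have hdist : 0 < distOU b d u := by
    rw [distOU_eq_sqrt]
    positivity
  rw [h.deltaO_eq_arcsin]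
  exact ⟨arcsin_pos.mpr (div_pos hb hdist), arcsin_le_pi_div_two _⟩

theorem Lmax_zero_zero_one (h : IsOpinion b d u) : Lmax b d u 0 0 1 = distOU b d u := by
  have hα := alphaProj_zero_zero_one b d u
  rcases h.1.eq_or_lt with rfl | hb
  · rw [deltaO_zero_left] at hα
    rw [Lmax_eq_of_alphaProj_eq (by linarith), h.distOU_zero_left]
  · obtain ⟨hδ_pos, hδ_le⟩ := h.deltaO_mem_Ioc hb
    have hδ_sin : 0 < sin (deltaO b d u) := sin_pos_of_pos_of_lt_pi hδ_pos (by linarith)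
    have hα_sin : sin (alphaProj b d u 0 0 1 + π / 3) = sin (deltaO b d u) := by
      rw [← sin_pi_sub, hα]
      congr 1
      ring
    rw [Lmax_eq_div_sin ⟨by linarith, by linarith⟩, hα_sin, div_eq_iff hδ_sin.ne',
      h.distOU_mul_sin_deltaO]

theorem lenTC_zero_zero_one (h : IsOpinion b d u) : lenTC b d u 0 0 1 = distOU b d u := by
  have hC : IsOpinion 0 0 1 := ⟨le_rfl, le_rfl, zero_le_one, by norm_num⟩
  rw [lenTC, hC.rO_zero_left, h.Lmax_zero_zero_one, one_mul]

end IsOpinion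

end

/-- If C = (0,0,1) (complete uncertainty), then the combination W = T⊛C equals (0,0,1). -/
theorem stmt16 (bT dT uT : ℝ) (hT : IsOpinion bT dT uT) :
    bW bT dT uT 0 0 1 = 0 ∧ dW bT dT uT 0 0 1 = 0 ∧ uW bT dT uT 0 0 1 = 1 := by
  have hu : uW bT dT uT 0 0 1 = 1 := by
    rw [uW, hT.lenTC_zero_zero_one, mul_comm, hT.distOU_mul_sin_alphaProj_zero_zero_one]
    ring
  have hd : dW bT dT uT 0 0 1 = 0 := by
    rw [dW, hu, hT.lenTC_zero_zero_one, mul_right_comm, mul_comm (Real.cos _),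
      hT.distOU_mul_cos_alphaProj_zero_zero_one, Real.cos_pi_div_three, Real.sin_pi_div_three]
    field_simp
    linarith [hT.2.2.2]
  have hb : bW bT dT uT 0 0 1 = 0 := by
    rw [bW, hd, hu]
    ring
  exact ⟨hb, hd, hu⟩
end
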